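/- arXiv:1701.03253 — 3 statements merged into one kernel-verified Lean document; each statement's English description precedes it below -/
import Mathlib

section
/- Suppose 0 ≤ ξ ≤ h12/(h11 + h12), and set η4(ξ) := 2·(1 − ξ)·h12 − 2·ξ·h11. Then for every x with 0 ≤ x ≤ L1max(ξ), the set { L2 : L2 ≥ 0 ∧ RectDown(x, L2, D(ξ)) ⊆ P } has a greatest element, equal to (−ξ·(h11·h22 − h12·h21) − (x/2)·h22) / h12 when 0 ≤ x ≤ η4(ξ), and equal to (−(1 − ξ)·(h11·h22 − h12·h21) − (x/2)·h21) / h11 when η4(ξ) ≤ x ≤ L1max(ξ). (Proposition 2, formula for L2down, Case I) -/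
/-!
Write `d = h12·h21 − h11·h22 > 0`. Inverting the linear map, a point lies in the parallelogram iff
its two coordinates `s = (h12·v.2 − h22·v.1)/d` and `t = (h21·v.1 − h11·v.2)/d` lie in `[0,1]`
(`mem_Pgram_iff`). Each of these four constraints is linear with coefficients of known sign, so on a
rectangle hanging from `D(ξ)` it is extremal at a corner; hence `rectDown_subset_iff` replaces
containment by four inequalities in `x` and `L2`. Two of them do not involve `L2` and, together with
nonnegativity of the two upper bounds on `L2`, they amount to `x ≤ L1max(ξ)`
(`bounds_of_le_L1max`). So the greatest admissible `L2` is the smaller of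
`(ξ·d − (x/2)·h22)/h12` and `((1−ξ)·d − (x/2)·h21)/h11`, and the two agree exactly at `x = η4(ξ)`.
-/

noncomputable section

/-- The parallelogram `P = { (h11·s + h12·t, h21·s + h22·t) : s,t ∈ [0,1] }`. -/
def Pgram (h11 h12 h21 h22 : ℝ) : Set (ℝ × ℝ) :=
  { v | ∃ s ∈ Set.Icc (0:ℝ) 1, ∃ t ∈ Set.Icc (0:ℝ) 1,
      v = (h11 * s + h12 * t, h21 * s + h22 * t) }

/-- The point `D(ξ)` on the diagonal of the parallelogram. -/
def Dpt (h11 h12 h21 h22 ξ : ℝ) : ℝ × ℝ := (ξ * (h11 + h12), ξ * (h21 + h22))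

/-- Closed axis-aligned rectangle with horizontal side `L1`, vertical side `L2`, midpoint `c`. -/
def Rect (L1 L2 : ℝ) (c : ℝ × ℝ) : Set (ℝ × ℝ) :=
  { v | |v.1 - c.1| ≤ L1 / 2 ∧ |v.2 - c.2| ≤ L2 / 2 }

/-- `L1max(ξ)`: sup of horizontal segment lengths centered at `D(ξ)` fitting inside `P`. -/
def L1max (h11 h12 h21 h22 ξ : ℝ) : ℝ :=
  sSup { L1 | L1 ≥ 0 ∧ Rect L1 0 (Dpt h11 h12 h21 h22 ξ) ⊆ Pgram h11 h12 h21 h22 }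

/-- `L2(ξ, x)`: sup of vertical side lengths of rectangles with horizontal side `x`
centered at `D(ξ)` fitting inside `P`. -/
def L2fun (h11 h12 h21 h22 ξ x : ℝ) : ℝ :=
  sSup { L2 | L2 ≥ 0 ∧ Rect x L2 (Dpt h11 h12 h21 h22 ξ) ⊆ Pgram h11 h12 h21 h22 }

/-- Rectangle with horizontal side `x` extended vertically upwards from `c` by `L2`. -/
def RectUp (x L2 : ℝ) (c : ℝ × ℝ) : Set (ℝ × ℝ) :=
  { v | |v.1 - c.1| ≤ x / 2 ∧ c.2 ≤ v.2 ∧ v.2 ≤ c.2 + L2 }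

/-- Rectangle with horizontal side `x` extended vertically downwards from `c` by `L2`. -/
def RectDown (x L2 : ℝ) (c : ℝ × ℝ) : Set (ℝ × ℝ) :=
  { v | |v.1 - c.1| ≤ x / 2 ∧ c.2 - L2 ≤ v.2 ∧ v.2 ≤ c.2 }

/-- `L2up(ξ, x)`: sup of upward one-sided vertical extensions. -/
def L2up (h11 h12 h21 h22 ξ x : ℝ) : ℝ :=
  sSup { L2 | L2 ≥ 0 ∧ RectUp x L2 (Dpt h11 h12 h21 h22 ξ) ⊆ Pgram h11 h12 h21 h22 }

/-- `L2down(ξ, x)`: sup of downward one-sided vertical extensions. -/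
def L2down (h11 h12 h21 h22 ξ x : ℝ) : ℝ :=
  sSup { L2 | L2 ≥ 0 ∧ RectDown x L2 (Dpt h11 h12 h21 h22 ξ) ⊆ Pgram h11 h12 h21 h22 }

/-- The parallelogram as an intersection of two strips, by Cramer's rule. -/
theorem mem_Pgram_iff {h11 h12 h21 h22 : ℝ} (hdet : h11 * h22 - h12 * h21 < 0) (v : ℝ × ℝ) :
    v ∈ Pgram h11 h12 h21 h22 ↔
      (0 ≤ h12 * v.2 - h22 * v.1 ∧ h12 * v.2 - h22 * v.1 ≤ h12 * h21 - h11 * h22) ∧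
      (0 ≤ h21 * v.1 - h11 * v.2 ∧ h21 * v.1 - h11 * v.2 ≤ h12 * h21 - h11 * h22) := by
  have hd : 0 < h12 * h21 - h11 * h22 := by linarith
  constructor
  · rintro ⟨s, ⟨hs0, hs1⟩, t, ⟨ht0, ht1⟩, rfl⟩
    refine ⟨⟨?_, ?_⟩, ?_, ?_⟩ <;> dsimp only
    · linarith [mul_nonneg hd.le hs0]
    · linarith [mul_nonneg hd.le (sub_nonneg.2 hs1)]
    · linarith [mul_nonneg hd.le ht0]
    · linarith [mul_nonneg hd.le (sub_nonneg.2 ht1)]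
  · rintro ⟨⟨hs0, hs1⟩, ht0, ht1⟩
    refine ⟨(h12 * v.2 - h22 * v.1) / (h12 * h21 - h11 * h22),
      ⟨div_nonneg hs0 hd.le, (div_le_one hd).2 hs1⟩,
      (h21 * v.1 - h11 * v.2) / (h12 * h21 - h11 * h22),
      ⟨div_nonneg ht0 hd.le, (div_le_one hd).2 ht1⟩, ?_⟩
    have hd' := hd.ne'
    ext
    · dsimp only
      rw [mul_div_assoc', mul_div_assoc', ← add_div, eq_div_iff hd']
      ring
    · dsimp only
      rw [mul_div_assoc', mul_div_assoc', ← add_div, eq_div_iff hd']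
      ring

/-- Containment of a rectangle hanging from `D(ξ)`, tested at its corners: the first two
inequalities come from the lower right corner, the last two from the upper left one. -/
theorem rectDown_subset_iff {h11 h12 h21 h22 : ℝ}
    (hpos11 : 0 < h11) (hpos12 : 0 < h12) (hpos21 : 0 < h21) (hpos22 : 0 < h22)
    (hdet : h11 * h22 - h12 * h21 < 0) (ξ : ℝ) {x L : ℝ} (hx : 0 ≤ x) (hL : 0 ≤ L) :
    RectDown x L (Dpt h11 h12 h21 h22 ξ) ⊆ Pgram h11 h12 h21 h22 ↔
      h12 * L + x / 2 * h22 ≤ ξ * (h12 * h21 - h11 * h22) ∧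
      h11 * L + x / 2 * h21 ≤ (1 - ξ) * (h12 * h21 - h11 * h22) ∧
      x / 2 * h22 ≤ (1 - ξ) * (h12 * h21 - h11 * h22) ∧
      x / 2 * h21 ≤ ξ * (h12 * h21 - h11 * h22) := by
  constructor
  · intro h
    have hlr := (mem_Pgram_iff hdet _).1 (@h (ξ * (h11 + h12) + x / 2, ξ * (h21 + h22) - L)
      ⟨by simp [Dpt, abs_of_nonneg (div_nonneg hx zero_le_two)], by simp [Dpt], by simp [Dpt, hL]⟩)
    have hul := (mem_Pgram_iff hdet _).1 (@h (ξ * (h11 + h12) - x / 2, ξ * (h21 + h22))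
      ⟨by simp [Dpt, abs_of_nonneg (div_nonneg hx zero_le_two)], by simp [Dpt, hL], by simp [Dpt]⟩)
    dsimp only at hlr hul
    obtain ⟨⟨h1, -⟩, -, h2⟩ := hlr
    obtain ⟨⟨-, h3⟩, h4, -⟩ := hul
    refine ⟨?_, ?_, ?_, ?_⟩ <;> linarith
  · rintro ⟨h1, h2, h3, h4⟩ ⟨a, b⟩ ⟨ha, hb0, hb1⟩
    simp only [Dpt] at ha hb0 hb1
    obtain ⟨ha0, ha1⟩ := abs_le.1 ha
    have r22 := mul_le_mul_of_nonneg_left ha1 hpos22.le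
    have r21 := mul_le_mul_of_nonneg_left ha1 hpos21.le
    have l22 := mul_le_mul_of_nonneg_left ha0 hpos22.le
    have l21 := mul_le_mul_of_nonneg_left ha0 hpos21.le
    have d12 := mul_le_mul_of_nonneg_left hb0 hpos12.le
    have d11 := mul_le_mul_of_nonneg_left hb0 hpos11.le
    have u12 := mul_le_mul_of_nonneg_left hb1 hpos12.le
    have u11 := mul_le_mul_of_nonneg_left hb1 hpos11.le
    rw [mem_Pgram_iff hdet]
    refine ⟨⟨?_, ?_⟩, ?_, ?_⟩ <;> dsimp only <;> linarith

/-- A horizontal segment is a rectangle of height zero, so `x ≤ L1max(ξ)` gives the inequalities of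
`rectDown_subset_iff` at `L = 0`. -/
theorem bounds_of_le_L1max {h11 h12 h21 h22 : ℝ}
    (hpos11 : 0 < h11) (hpos12 : 0 < h12) (hpos21 : 0 < h21) (hpos22 : 0 < h22)
    (hdet : h11 * h22 - h12 * h21 < 0) {ξ x : ℝ} (hξ0 : 0 ≤ ξ) (hξ1 : ξ ≤ 1)
    (hx : x ≤ L1max h11 h12 h21 h22 ξ) :
    x / 2 * h22 ≤ ξ * (h12 * h21 - h11 * h22) ∧
      x / 2 * h21 ≤ (1 - ξ) * (h12 * h21 - h11 * h22) ∧
      x / 2 * h22 ≤ (1 - ξ) * (h12 * h21 - h11 * h22) ∧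
      x / 2 * h21 ≤ ξ * (h12 * h21 - h11 * h22) := by
  have hd : 0 < h12 * h21 - h11 * h22 := by linarith
  have key : ∀ L ∈ {L1 | L1 ≥ 0 ∧ Rect L1 0 (Dpt h11 h12 h21 h22 ξ) ⊆ Pgram h11 h12 h21 h22},
      L / 2 * h22 ≤ ξ * (h12 * h21 - h11 * h22) ∧
      L / 2 * h21 ≤ (1 - ξ) * (h12 * h21 - h11 * h22) ∧
      L / 2 * h22 ≤ (1 - ξ) * (h12 * h21 - h11 * h22) ∧
      L / 2 * h21 ≤ ξ * (h12 * h21 - h11 * h22) := by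
    rintro L ⟨hL, hsub⟩
    have hdown : RectDown L 0 (Dpt h11 h12 h21 h22 ξ) ⊆ Pgram h11 h12 h21 h22 := by
      refine fun v hv => hsub ⟨hv.1, ?_⟩
      rw [abs_le]
      constructor <;> linarith [hv.2.1, hv.2.2]
    simpa using (rectDown_subset_iff hpos11 hpos12 hpos21 hpos22 hdet ξ hL le_rfl).1 hdown
  -- A linear bound valid on all admissible lengths passes to the supremum.
  have sup : ∀ h r : ℝ, 0 < h → 0 ≤ r →
      (∀ L ∈ {L1 | L1 ≥ 0 ∧ Rect L1 0 (Dpt h11 h12 h21 h22 ξ) ⊆ Pgram h11 h12 h21 h22},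
        L / 2 * h ≤ r) → x / 2 * h ≤ r := by
    intro h r hh hr hall
    have : x ≤ 2 * r / h := hx.trans (Real.sSup_le (fun L hL => by
      rw [le_div_iff₀ hh]; linarith [hall L hL]) (by positivity))
    rw [le_div_iff₀ hh] at this
    linarith
  have hr0 := mul_nonneg hξ0 hd.le
  have hr1 := mul_nonneg (sub_nonneg.2 hξ1) hd.le
  exact ⟨sup _ _ hpos22 hr0 fun L hL => (key L hL).1,
    sup _ _ hpos21 hr1 fun L hL => (key L hL).2.1,
    sup _ _ hpos22 hr1 fun L hL => (key L hL).2.2.1,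
    sup _ _ hpos21 hr0 fun L hL => (key L hL).2.2.2⟩

theorem stmt6 (h11 h12 h21 h22 : ℝ)
    (hpos11 : 0 < h11) (hpos12 : 0 < h12) (hpos21 : 0 < h21) (hpos22 : 0 < h22)
    (hdet : h11 * h22 - h12 * h21 < 0)
    (ξ : ℝ) (hξ0 : 0 ≤ ξ) (hξ1 : ξ ≤ h12 / (h11 + h12)) :
    ∀ x, 0 ≤ x → x ≤ L1max h11 h12 h21 h22 ξ →
      (x ≤ 2 * (1 - ξ) * h12 - 2 * ξ * h11 →
        IsGreatest
          { L2 | L2 ≥ 0 ∧ RectDown x L2 (Dpt h11 h12 h21 h22 ξ) ⊆ Pgram h11 h12 h21 h22 }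
          ((-ξ * (h11 * h22 - h12 * h21) - (x / 2) * h22) / h12)) ∧
      (2 * (1 - ξ) * h12 - 2 * ξ * h11 ≤ x →
        IsGreatest
          { L2 | L2 ≥ 0 ∧ RectDown x L2 (Dpt h11 h12 h21 h22 ξ) ⊆ Pgram h11 h12 h21 h22 }
          ((-(1 - ξ) * (h11 * h22 - h12 * h21) - (x / 2) * h21) / h11)) := by
  intro x hx0 hx
  have hd : 0 < h12 * h21 - h11 * h22 := by linarith
  have hξ : ξ ≤ 1 := hξ1.trans ((div_le_one (by linarith)).2 (by linarith))
  obtain ⟨b1, b2, b3, b4⟩ := bounds_of_le_L1max hpos11 hpos12 hpos21 hpos22 hdet hξ0 hξ hx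
  have hiff := fun L (hL : 0 ≤ L) =>
    rectDown_subset_iff hpos11 hpos12 hpos21 hpos22 hdet ξ hx0 hL
  constructor
  · intro hη
    have hL : 0 ≤ (-ξ * (h11 * h22 - h12 * h21) - (x / 2) * h22) / h12 :=
      div_nonneg (by linarith) hpos12.le
    refine ⟨⟨hL, (hiff _ hL).2 ⟨?_, ?_, b3, b4⟩⟩, ?_⟩
    · rw [mul_div_cancel₀ _ hpos12.ne']
      linarith
    -- With denominators cleared, the two bounds on `L2` differ by `d/2` times `η4(ξ) − x ≥ 0`.
    · rw [← le_sub_iff_add_le, mul_div_assoc', div_le_iff₀ hpos12]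
      linarith [mul_nonneg hd.le (sub_nonneg.2 hη)]
    · rintro L ⟨hL0, hsub⟩
      rw [le_div_iff₀ hpos12]
      linarith [((hiff L hL0).1 hsub).1]
  · intro hη
    have hL : 0 ≤ (-(1 - ξ) * (h11 * h22 - h12 * h21) - (x / 2) * h21) / h11 :=
      div_nonneg (by linarith) hpos11.le
    refine ⟨⟨hL, (hiff _ hL).2 ⟨?_, ?_, b3, b4⟩⟩, ?_⟩
    · rw [← le_sub_iff_add_le, mul_div_assoc', div_le_iff₀ hpos11]
      linarith [mul_nonneg hd.le (sub_nonneg.2 hη)]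
    · rw [mul_div_cancel₀ _ hpos11.ne']
      linarith
    · rintro L ⟨hL0, hsub⟩
      rw [le_div_iff₀ hpos11]
      linarith [((hiff L hL0).1 hsub).2.1]
end
end

section
/- For every ξ ∈ [0,1] and every x with 0 ≤ x ≤ L1max(ξ), L2up(1 − ξ, x) = L2down(ξ, x): the maximal one-sided upward extension at the diagonal point D(1 − ξ) equals the maximal one-sided downward extension at D(ξ). (Intermediate identity (91) in the proof of Lemma 3) -/
/-!
The parallelogram `Pgram` is invariant under the point reflection `v ↦ D(1) - v` in its centre,
because `(s, t) ↦ (1 - s, 1 - t)` preserves the unit square. This reflection swaps `D(ξ)` with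
`D(1 - ξ)`, and upward rectangles with downward ones. Hence the same extensions `L2` are
admissible upwards at `D(1 - ξ)` and downwards at `D(ξ)`, and the two suprema are taken over the
same set.
-/

noncomputable section

/-- The reflection in the centre of the parallelogram maps it to itself. -/
theorem Pgram_reflect {h11 h12 h21 h22 : ℝ} {v : ℝ × ℝ} (hv : v ∈ Pgram h11 h12 h21 h22) :
    Dpt h11 h12 h21 h22 1 - v ∈ Pgram h11 h12 h21 h22 := by
  obtain ⟨s, hs, t, ht, rfl⟩ := hv
  refine ⟨1 - s, ⟨by linarith [hs.2], by linarith [hs.1]⟩,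
    1 - t, ⟨by linarith [ht.2], by linarith [ht.1]⟩, ?_⟩
  ext <;> simp only [Dpt, Prod.fst_sub, Prod.snd_sub] <;> ring

/-- The reflection in the centre swaps the upward rectangle at `D(1 - ξ)` with the downward
rectangle at `D(ξ)`. -/
theorem reflect_mem_RectUp_iff {h11 h12 h21 h22 ξ x L : ℝ} {v : ℝ × ℝ} :
    Dpt h11 h12 h21 h22 1 - v ∈ RectUp x L (Dpt h11 h12 h21 h22 (1 - ξ)) ↔
      v ∈ RectDown x L (Dpt h11 h12 h21 h22 ξ) := by
  have h : 1 * (h11 + h12) - v.1 - (1 - ξ) * (h11 + h12) = -(v.1 - ξ * (h11 + h12)) := by ring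
  simp only [RectUp, RectDown, Dpt, Set.mem_setOf_eq, Prod.fst_sub, Prod.snd_sub, h, abs_neg]
  constructor <;> rintro ⟨h1, h2, h3⟩ <;> exact ⟨h1, by linarith, by linarith⟩

theorem RectUp_subset_iff {h11 h12 h21 h22 ξ x L : ℝ} :
    RectUp x L (Dpt h11 h12 h21 h22 (1 - ξ)) ⊆ Pgram h11 h12 h21 h22 ↔
      RectDown x L (Dpt h11 h12 h21 h22 ξ) ⊆ Pgram h11 h12 h21 h22 := by
  constructor
  · intro h v hv
    simpa using Pgram_reflect (h (reflect_mem_RectUp_iff.2 hv))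
  · intro h v hv
    have hv' : Dpt h11 h12 h21 h22 1 - v ∈ RectDown x L (Dpt h11 h12 h21 h22 ξ) :=
      reflect_mem_RectUp_iff.1 (by simpa using hv)
    simpa using Pgram_reflect (h hv')

theorem stmt11 (h11 h12 h21 h22 : ℝ)
    (hpos11 : 0 < h11) (hpos12 : 0 < h12) (hpos21 : 0 < h21) (hpos22 : 0 < h22)
    (hdet : h11 * h22 - h12 * h21 < 0) :
    ∀ ξ ∈ Set.Icc (0:ℝ) 1, ∀ x, 0 ≤ x → x ≤ L1max h11 h12 h21 h22 ξ →
      L2up h11 h12 h21 h22 (1 - ξ) x = L2down h11 h12 h21 h22 ξ x := by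
  intro ξ _ x _ _
  simp only [L2up, L2down, RectUp_subset_iff]
end
end

section
/- For every ξ ∈ [0,1] and all L1, L2 ≥ 0: Rect(L1, L2, D(ξ)) ⊆ P if and only if Rect(L1, L2, D(1 − ξ)) ⊆ P. Consequently the zero-forcing rate region and its boundary at dimming target ξ coincide with those at dimming target 1 − ξ. (Result 3 / Result 4: symmetry of the rate region about ξ = 1/2.) -/
/-! The point reflection `v ↦ D(1) - v` through the centre of the parallelogram maps the
parallelogram to itself (replace `s, t` by `1 - s, 1 - t`), and it carries the rectangle centred at
`D(ξ)` to the one of the same size centred at `D(1 - ξ)`. Hence containment for `ξ` gives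
containment for `1 - ξ`, and since `ξ ↦ 1 - ξ` is an involution, the converse follows. -/

noncomputable section

theorem rect_subset_pgram_reflect {h11 h12 h21 h22 ξ L1 L2 : ℝ}
    (h : Rect L1 L2 (Dpt h11 h12 h21 h22 ξ) ⊆ Pgram h11 h12 h21 h22) :
    Rect L1 L2 (Dpt h11 h12 h21 h22 (1 - ξ)) ⊆ Pgram h11 h12 h21 h22 := by
  rintro ⟨x, y⟩ ⟨hx, hy⟩
  have hmem : ((h11 + h12 - x, h21 + h22 - y) : ℝ × ℝ) ∈
      Rect L1 L2 (Dpt h11 h12 h21 h22 ξ) := by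
    simp only [Rect, Dpt, Set.mem_ofPred_eq] at hx hy ⊢
    rw [abs_le] at hx hy
    rw [abs_le, abs_le]
    refine ⟨⟨?_, ?_⟩, ?_, ?_⟩ <;> linarith [hx.1, hx.2, hy.1, hy.2]
  obtain ⟨s, hs, t, ht, hst⟩ := h hmem
  obtain ⟨h1, h2⟩ := Prod.mk.inj hst
  refine ⟨1 - s, ⟨by linarith [hs.2], by linarith [hs.1]⟩,
    1 - t, ⟨by linarith [ht.2], by linarith [ht.1]⟩, Prod.ext ?_ ?_⟩
  · change x = _
    linarith
  · change y = _
    linarith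

theorem stmt18 (h11 h12 h21 h22 : ℝ)
    (hpos11 : 0 < h11) (hpos12 : 0 < h12) (hpos21 : 0 < h21) (hpos22 : 0 < h22)
    (hdet : h11 * h22 - h12 * h21 < 0) :
    ∀ ξ ∈ Set.Icc (0:ℝ) 1, ∀ L1 L2 : ℝ, 0 ≤ L1 → 0 ≤ L2 →
      (Rect L1 L2 (Dpt h11 h12 h21 h22 ξ) ⊆ Pgram h11 h12 h21 h22 ↔
        Rect L1 L2 (Dpt h11 h12 h21 h22 (1 - ξ)) ⊆ Pgram h11 h12 h21 h22) := by
  intro ξ _ L1 L2 _ _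
  refine ⟨rect_subset_pgram_reflect, fun h => ?_⟩
  simpa only [sub_sub_cancel] using rect_subset_pgram_reflect h
end
end
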